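/- arXiv:2411.07051 — 3 statements merged into one kernel-verified Lean document; each statement's English description precedes it below -/
import Mathlib

section
/- Let L ⊂ ℝ² be a line that is not parallel to the x-axis and not parallel to the y-axis, and let x ∈ ℝ². Then there exists a unique point x̂ ∈ L such that d_m(x, x̂) ≤ d_m(x, y) for all y ∈ L, where d_m is the maximum metric. -/
open MeasureTheory

/-- The `p`-Wasserstein distance between two measures, defined as the infimum over all
couplings `π` of `μ` and `ν` of `(∬ d(x,y)^p dπ)^(1/p)`. -/
noncomputable def Wdist {X : Type*} [MeasurableSpace X] [PseudoMetricSpace X] (p : ℝ)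
    (μ ν : Measure X) : ℝ :=
  (⨅ π ∈ {π : Measure (X × X) | π.map Prod.fst = μ ∧ π.map Prod.snd = ν},
    (∫⁻ q, edist q.1 q.2 ^ p ∂π) ^ (1 / p)).toReal

/-- The `p`-Wasserstein space over `X`: Borel probability measures on `X` with finite
`p`-th moment. -/
def WSet (X : Type*) [MeasurableSpace X] [PseudoMetricSpace X] (p : ℝ) : Set (Measure X) :=
  {μ | IsProbabilityMeasure μ ∧ ∃ x₀ : X, ∫⁻ x, edist x x₀ ^ p ∂μ < ⊤}

/-- An isometry of the underlying metric space: a distance-preserving bijection. -/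
def IsIsom {X : Type*} [PseudoMetricSpace X] (T : X → X) : Prop :=
  Function.Bijective T ∧ ∀ x y, dist (T x) (T y) = dist x y

/-- An isometry of the `p`-Wasserstein space over `X`: a bijection of the space of
probability measures with finite `p`-th moment preserving the Wasserstein distance. -/
def IsWIsometry (X : Type*) [MeasurableSpace X] [PseudoMetricSpace X] (p : ℝ)
    (Φ : Measure X → Measure X) : Prop :=
  Set.BijOn Φ (WSet X p) (WSet X p) ∧
    ∀ μ ∈ WSet X p, ∀ ν ∈ WSet X p, Wdist p (Φ μ) (Φ ν) = Wdist p μ ν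

/-- The (topological) support of a measure. -/
def msupport {X : Type*} [TopologicalSpace X] [MeasurableSpace X] (μ : Measure X) : Set X :=
  {x | ∀ U : Set X, IsOpen U → x ∈ U → μ U ≠ 0}

def diagLine (ε a : ℝ) : Set (ℝ × ℝ) := {z | z.2 = ε * z.1 + a}

def Lplus : Set (ℝ × ℝ) := {z | z.2 = z.1}

def Lminus : Set (ℝ × ℝ) := {z | z.2 = -z.1}

/-- The closed square `Q = [-1,1]²`. -/
abbrev Qs : Set (ℝ × ℝ) := Set.Icc (-1, -1) (1, 1)

def LplusQ : Set ↥Qs := {q | (q : ℝ × ℝ).2 = (q : ℝ × ℝ).1}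

def LminusQ : Set ↥Qs := {q | (q : ℝ × ℝ).2 = -(q : ℝ × ℝ).1}


/-- The line through `w` with direction `v`. -/
def lineThrough (w v : ℝ × ℝ) : Set (ℝ × ℝ) := {z | ∃ t : ℝ, z = w + t • v}

/-! Let `K` be a convex subset of a sup-metric product whose points are determined by either
coordinate, as for a line parallel to neither axis. Two distinct points of `K` nearest to `x` would
differ in both coordinates. By strict convexity of the factors, each coordinate of their midpoint
would then be closer to that of `x` than the minimal distance, and so would the midpoint to `x`. -/

section StrictConvex

variable {E F : Type*} [NormedAddCommGroup E] [NormedSpace ℝ E] [StrictConvexSpace ℝ E]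
  [NormedAddCommGroup F] [NormedSpace ℝ F] [StrictConvexSpace ℝ F]
  {K : Set (E × F)} {p q x : E × F}

theorem dist_midpoint_lt_max_of_fst_ne_of_snd_ne (h₁ : p.1 ≠ q.1) (h₂ : p.2 ≠ q.2) (x : E × F) :
    dist x (midpoint ℝ p q) < max (dist x p) (dist x q) := by
  have hfst : dist (midpoint ℝ p.1 q.1) x.1 < max (dist p.1 x.1) (dist q.1 x.1) :=
    (sbtw_midpoint_of_ne ℝ h₁).dist_lt_max_dist x.1
  have hsnd : dist (midpoint ℝ p.2 q.2) x.2 < max (dist p.2 x.2) (dist q.2 x.2) :=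
    (sbtw_midpoint_of_ne ℝ h₂).dist_lt_max_dist x.2
  have hmid : midpoint ℝ p q = (midpoint ℝ p.1 q.1, midpoint ℝ p.2 q.2) :=
    Prod.ext (AffineMap.fst.map_midpoint p q) (AffineMap.snd.map_midpoint p q)
  simp only [dist_comm x, hmid, Prod.dist_eq]
  rw [max_max_max_comm]
  exact max_lt_max hfst hsnd

theorem eq_of_forall_dist_le_of_injOn_fst_of_injOn_snd (hconv : Convex ℝ K)
    (hfst : Set.InjOn Prod.fst K) (hsnd : Set.InjOn Prod.snd K) (hpK : p ∈ K) (hqK : q ∈ K)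
    (hp : ∀ y ∈ K, dist x p ≤ dist x y) (hq : ∀ y ∈ K, dist x q ≤ dist x y) : p = q := by
  by_contra hpq
  have hmK : midpoint ℝ p q ∈ K := hconv.midpoint_mem hpK hqK
  have hlt : dist x (midpoint ℝ p q) < max (dist x p) (dist x q) :=
    dist_midpoint_lt_max_of_fst_ne_of_snd_ne (hfst.ne hpK hqK hpq) (hsnd.ne hpK hqK hpq) x
  exact hlt.not_ge (max_le (hp _ hmK) (hq _ hmK))

theorem unique_nearest_point_on_line_general [ProperSpace E] [ProperSpace F]
    (hne : K.Nonempty) (hclosed : IsClosed K) (hconv : Convex ℝ K)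
    (hfst : Set.InjOn Prod.fst K) (hsnd : Set.InjOn Prod.snd K) (x : E × F) :
    ∃! xhat : E × F, xhat ∈ K ∧ ∀ y ∈ K, dist x xhat ≤ dist x y := by
  obtain ⟨p, hpK, hp⟩ := hclosed.exists_infDist_eq_dist hne x
  have hmin : ∀ y ∈ K, dist x p ≤ dist x y := fun y hy =>
    hp ▸ Metric.infDist_le_dist_of_mem hy
  exact ⟨p, ⟨hpK, hmin⟩, fun q ⟨hqK, hq⟩ =>
    eq_of_forall_dist_le_of_injOn_fst_of_injOn_snd hconv hfst hsnd hqK hpK hq hmin⟩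

end StrictConvex

section Line

variable (w v : ℝ × ℝ)

theorem lineThrough_eq_coe_mk' :
    lineThrough w v = (AffineSubspace.mk' w (ℝ ∙ v) : Set (ℝ × ℝ)) := by
  ext z
  simp only [lineThrough, Set.mem_ofPred_eq, SetLike.mem_coe, AffineSubspace.mem_mk', vsub_eq_sub,
    Submodule.mem_span_singleton, eq_sub_iff_add_eq', eq_comm]

theorem lineThrough_nonempty : (lineThrough w v).Nonempty := by
  rw [lineThrough_eq_coe_mk']
  exact AffineSubspace.mk'_nonempty w _

theorem isClosed_lineThrough : IsClosed (lineThrough w v) := by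
  rw [lineThrough_eq_coe_mk']
  exact AffineSubspace.closed_of_finiteDimensional _

theorem convex_lineThrough : Convex ℝ (lineThrough w v) := by
  rw [lineThrough_eq_coe_mk']
  exact AffineSubspace.convex _

variable {v}

theorem injOn_lineThrough {M : Type*} [AddCommGroup M] [Module ℝ M] (f : ℝ × ℝ →ₗ[ℝ] M)
    (hfv : f v ≠ 0) : Set.InjOn f (lineThrough w v) := by
  rintro _ ⟨s, rfl⟩ _ ⟨t, rfl⟩ h
  have hst : s • f v = t • f v := by simpa only [map_add, map_smul, add_right_inj] using h
  rw [smul_left_injective ℝ hfv hst]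

end Line

/-- For a line `L ⊂ ℝ²` not parallel to either coordinate axis and any `x ∈ ℝ²`,
there is a unique nearest point of `L` to `x` in the maximum metric. -/
theorem unique_nearest_point_on_line (w v : ℝ × ℝ) (hv1 : v.1 ≠ 0) (hv2 : v.2 ≠ 0)
    (x : ℝ × ℝ) :
    ∃! xhat : ℝ × ℝ, xhat ∈ lineThrough w v ∧
      ∀ y ∈ lineThrough w v, dist x xhat ≤ dist x y :=
  unique_nearest_point_on_line_general (lineThrough_nonempty w v) (isClosed_lineThrough w v)
    (convex_lineThrough w v) (injOn_lineThrough w (LinearMap.fst ℝ ℝ ℝ) hv1)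
    (injOn_lineThrough w (LinearMap.snd ℝ ℝ ℝ) hv2) x
end

section
/- Let p ≥ 1, let L ⊂ ℝ² be a line not parallel to either coordinate axis, and let P_L : ℝ² → L be the nearest-point projection onto L with respect to the maximum metric d_m. For every μ ∈ 𝒲_p(ℝ²), the push-forward μ̂ = (P_L)_#μ is the unique measure in 𝒲_p(L) = {ν ∈ 𝒲_p(ℝ²) : supp(ν) ⊆ L} satisfying d_{W_p}(μ, μ̂) ≤ d_{W_p}(μ, ν) for all ν ∈ 𝒲_p(L). -/
open MeasureTheory

/-!
On a line `L` that is not parallel to an axis the nearest point is *strongly* unique: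
`d(x, P x) + κ d(P x, y) ≤ d(x, y)` for all `y ∈ L`, with some `κ > 0`. As `p ≥ 1`, taking `p`-th
powers and integrating against a coupling lifts this to measures: if `ν` lives on `L`, then
`W(μ, P_#μ)ᵖ + κᵖ W(P_#μ, ν)ᵖ ≤ W(μ, ν)ᵖ`, which gives minimality and uniqueness at once.
-/

open Metric Set
open scoped ENNReal NNReal

lemma edist_rpow_le_two_rpow_mul {X : Type*} [PseudoEMetricSpace X] {p : ℝ} (hp : 0 ≤ p)
    (x y z : X) : edist x z ^ p ≤ 2 ^ p * (edist x y ^ p + edist y z ^ p) :=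
  calc edist x z ^ p ≤ (2 * max (edist x y) (edist y z)) ^ p := by
        refine ENNReal.rpow_le_rpow ((edist_triangle x y z).trans ?_) hp
        rw [two_mul]
        exact add_le_add (le_max_left _ _) (le_max_right _ _)
    _ = 2 ^ p * max (edist x y ^ p) (edist y z ^ p) := by
        rw [ENNReal.mul_rpow_of_nonneg _ _ hp, (ENNReal.monotone_rpow_of_nonneg hp).map_max]
    _ ≤ 2 ^ p * (edist x y ^ p + edist y z ^ p) := by
        gcongr
        exact max_le_add_of_nonneg zero_le zero_le

section TransportCost

variable {X : Type*} [MeasurableSpace X] [PseudoMetricSpace X] {p : ℝ} {μ ν : Measure X}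

/-- The optimal transport cost for `d ^ p`, that is, the `p`-th power of the Wasserstein distance.
It takes values in `[0, ∞]`, so that it is finite only if some coupling has finite cost. -/
noncomputable def transportCost (p : ℝ) (μ ν : Measure X) : ℝ≥0∞ :=
  ⨅ π ∈ {π : Measure (X × X) | π.map Prod.fst = μ ∧ π.map Prod.snd = ν},
    ∫⁻ q, edist q.1 q.2 ^ p ∂π

lemma Wdist_eq_toReal_transportCost_rpow (hp : 0 < p) (μ ν : Measure X) :
    Wdist p μ ν = (transportCost p μ ν ^ (1 / p)).toReal := by
  have hiso := (ENNReal.orderIsoRpow (1 / p) (one_div_pos.2 hp)).map_iInf₂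
    fun (π : Measure (X × X)) (_ : π.map Prod.fst = μ ∧ π.map Prod.snd = ν) =>
      ∫⁻ q, edist q.1 q.2 ^ p ∂π
  exact congrArg ENNReal.toReal hiso.symm

lemma Wdist_le_Wdist_iff {μ' ν' : Measure X} (hp : 0 < p) (h : transportCost p μ ν ≠ ∞)
    (h' : transportCost p μ' ν' ≠ ∞) :
    Wdist p μ ν ≤ Wdist p μ' ν' ↔ transportCost p μ ν ≤ transportCost p μ' ν' := by
  have hp' : 0 < 1 / p := one_div_pos.2 hp
  rw [Wdist_eq_toReal_transportCost_rpow hp, Wdist_eq_toReal_transportCost_rpow hp,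
    ENNReal.toReal_le_toReal (ENNReal.rpow_ne_top_of_nonneg hp'.le h)
      (ENNReal.rpow_ne_top_of_nonneg hp'.le h'), ENNReal.rpow_le_rpow_iff hp']

lemma lintegral_edist_rpow_lt_top_of_mem_WSet (hp : 0 ≤ p) (hμ : μ ∈ WSet X p) (y : X) :
    ∫⁻ x, edist x y ^ p ∂μ < ∞ := by
  obtain ⟨_, x₀, hx₀⟩ := hμ
  have h2 : (2 : ℝ≥0∞) ^ p ≠ ∞ := ENNReal.rpow_ne_top_of_nonneg hp ENNReal.ofNat_ne_top
  calc ∫⁻ x, edist x y ^ p ∂μ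
      ≤ ∫⁻ x, 2 ^ p * (edist x x₀ ^ p + edist x₀ y ^ p) ∂μ :=
        lintegral_mono fun x => edist_rpow_le_two_rpow_mul hp x x₀ y
    _ = 2 ^ p * (∫⁻ x, edist x x₀ ^ p ∂μ + edist x₀ y ^ p) := by
        rw [lintegral_const_mul' _ _ h2, lintegral_add_right _ measurable_const, lintegral_const,
          measure_univ, mul_one]
    _ < ∞ := ENNReal.mul_lt_top h2.lt_top <| ENNReal.add_lt_top.2
        ⟨hx₀, ENNReal.rpow_lt_top_of_nonneg hp (edist_ne_top _ _)⟩

variable [OpensMeasurableSpace X] [SecondCountableTopology X]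

lemma transportCost_map_le_lintegral {Ω : Type*} [MeasurableSpace Ω] (γ : Measure Ω) {f g : Ω → X}
    (hf : Measurable f) (hg : Measurable g) :
    transportCost p (γ.map f) (γ.map g) ≤ ∫⁻ ω, edist (f ω) (g ω) ^ p ∂γ := by
  have hfg : Measurable fun ω => (f ω, g ω) := hf.prodMk hg
  have hfst : (γ.map fun ω => (f ω, g ω)).map Prod.fst = γ.map f :=
    Measure.map_map measurable_fst hfg
  have hsnd : (γ.map fun ω => (f ω, g ω)).map Prod.snd = γ.map g :=
    Measure.map_map measurable_snd hfg
  exact (iInf₂_le _ ⟨hfst, hsnd⟩).trans_eq (lintegral_map (by fun_prop) hfg)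

lemma transportCost_lt_top (hp : 0 ≤ p) (hμ : μ ∈ WSet X p) (hν : ν ∈ WSet X p) :
    transportCost p μ ν < ∞ := by
  have := hμ.1
  have := hν.1
  obtain ⟨x₀, hμx₀⟩ := hμ.2
  have hνx₀ := lintegral_edist_rpow_lt_top_of_mem_WSet hp hν x₀
  have h2 : (2 : ℝ≥0∞) ^ p ≠ ∞ := ENNReal.rpow_ne_top_of_nonneg hp ENNReal.ofNat_ne_top
  have hm : Measurable fun x : X => edist x x₀ ^ p := by fun_prop
  calc transportCost p μ ν ≤ ∫⁻ q, edist q.1 q.2 ^ p ∂μ.prod ν := by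
        simpa only [Measure.map_fst_prod, Measure.map_snd_prod, measure_univ, one_smul] using
          transportCost_map_le_lintegral (p := p) (μ.prod ν) measurable_fst measurable_snd
    _ ≤ ∫⁻ q, 2 ^ p * (edist q.1 x₀ ^ p + edist q.2 x₀ ^ p) ∂μ.prod ν :=
        lintegral_mono fun q => by
          simpa only [edist_comm x₀] using edist_rpow_le_two_rpow_mul hp q.1 x₀ q.2
    _ = 2 ^ p * (∫⁻ x, edist x x₀ ^ p ∂μ + ∫⁻ y, edist y x₀ ^ p ∂ν) := by
        rw [lintegral_const_mul' _ _ h2, lintegral_add_left (by fun_prop),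
          measurePreserving_fst.lintegral_comp hm, measurePreserving_snd.lintegral_comp hm]
    _ < ∞ := ENNReal.mul_lt_top h2.lt_top (ENNReal.add_lt_top.2 ⟨hμx₀, hνx₀⟩)

lemma levyProkhorovEDist_le_transportCost_rpow [IsProbabilityMeasure μ] [IsProbabilityMeasure ν]
    (hp : 0 ≤ p) : levyProkhorovEDist μ ν ≤ transportCost p μ ν ^ (1 / (p + 1)) := by
  refine levyProkhorovEDist_le_of_forall_le μ ν _ fun ε B hε hε_top hB => ?_
  have hε0 : ε ≠ 0 := hε.ne_bot
  have hεp : ε ^ (p + 1) = ε ^ p * ε := by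
    rw [ENNReal.rpow_add p 1 hε0 hε_top.ne, ENNReal.rpow_one]
  have hcost : transportCost p μ ν < ε ^ p * ε := by
    rwa [← hεp, ← ENNReal.rpow_inv_lt_iff (by positivity), ← one_div]
  simp only [transportCost, iInf_lt_iff] at hcost
  obtain ⟨π, ⟨rfl, rfl⟩, hπ⟩ := hcost
  have hfar : π {q | ε ≤ edist q.1 q.2} ≤ ε := by
    have hmarkov := mul_meas_ge_le_lintegral (μ := π)
      (show Measurable fun q : X × X => edist q.1 q.2 ^ p by fun_prop) (ε ^ p)
    have hsub : {q : X × X | ε ≤ edist q.1 q.2} ⊆ {q | ε ^ p ≤ edist q.1 q.2 ^ p} :=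
      fun _ hq => ENNReal.rpow_le_rpow hq hp
    refine (ENNReal.mul_le_mul_iff_right ?_ (ENNReal.rpow_ne_top_of_nonneg hp hε_top.ne)).1
      ((mul_le_mul_right (measure_mono hsub) _).trans (hmarkov.trans hπ.le))
    exact (ENNReal.rpow_pos hε0.bot_lt hε_top.ne).ne'
  have hcover : Prod.fst ⁻¹' B ⊆
      Prod.snd ⁻¹' thickening ε.toReal B ∪ {q : X × X | ε ≤ edist q.1 q.2} := by
    refine fun q hq => (lt_or_ge (edist q.1 q.2) ε).imp_left fun hlt => ?_
    refine (mem_thickening_iff_exists_edist_lt _ _).2 ⟨q.1, hq, ?_⟩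
    rwa [edist_comm, ENNReal.ofReal_toReal hε_top.ne]
  rw [Measure.map_apply measurable_fst hB,
    Measure.map_apply measurable_snd isOpen_thickening.measurableSet]
  exact (measure_mono hcover).trans ((measure_union_le _ _).trans (by gcongr))

end TransportCost

lemma eq_of_transportCost_eq_zero {X : Type*} [MeasurableSpace X] [PseudoMetricSpace X]
    [BorelSpace X] [SecondCountableTopology X] {p : ℝ} {μ ν : Measure X} [IsProbabilityMeasure μ]
    [IsProbabilityMeasure ν] (hp : 0 ≤ p) (h : transportCost p μ ν = 0) : μ = ν := by
  have hLP : levyProkhorovEDist μ ν = 0 := by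
    refine le_zero_iff.1 ((levyProkhorovEDist_le_transportCost_rpow hp).trans_eq ?_)
    rw [h, ENNReal.zero_rpow_of_pos (by positivity)]
  refine ext_of_generate_finite _ (BorelSpace.measurable_eq.trans borel_eq_generateFrom_isClosed)
    isPiSystem_isClosed (fun F hF => ?_) (by rw [measure_univ, measure_univ])
  exact measure_eq_measure_of_levyProkhorovEDist_eq_zero_of_isClosed hLP hF
    ⟨1, one_pos, measure_ne_top _ _⟩ ⟨1, one_pos, measure_ne_top _ _⟩

lemma map_mem_WSet_of_lipschitzWith {X Y : Type*} [MeasurableSpace X] [PseudoMetricSpace X]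
    [OpensMeasurableSpace X] [MeasurableSpace Y] [PseudoMetricSpace Y] [BorelSpace Y] {p : ℝ}
    {K : ℝ≥0} {f : X → Y} {μ : Measure X} (hp : 0 ≤ p) (hf : LipschitzWith K f)
    (hμ : μ ∈ WSet X p) : μ.map f ∈ WSet Y p := by
  have := hμ.1
  obtain ⟨x₀, hx₀⟩ := hμ.2
  have hfm : Measurable f := hf.continuous.measurable
  have hK : (K : ℝ≥0∞) ^ p ≠ ∞ := ENNReal.rpow_ne_top_of_nonneg hp ENNReal.coe_ne_top
  refine ⟨Measure.isProbabilityMeasure_map hfm.aemeasurable, f x₀, ?_⟩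
  calc ∫⁻ y, edist y (f x₀) ^ p ∂μ.map f = ∫⁻ x, edist (f x) (f x₀) ^ p ∂μ :=
        lintegral_map (by fun_prop) hfm
    _ ≤ ∫⁻ x, K ^ p * edist x x₀ ^ p ∂μ := lintegral_mono fun x => by
        simpa only [ENNReal.mul_rpow_of_nonneg _ _ hp] using ENNReal.rpow_le_rpow (hf x x₀) hp
    _ = K ^ p * ∫⁻ x, edist x x₀ ^ p ∂μ := lintegral_const_mul' _ _ hK
    _ < ∞ := ENNReal.mul_lt_top hK.lt_top hx₀

lemma msupport_eq_support {X : Type*} [TopologicalSpace X] [MeasurableSpace X] (μ : Measure X) :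
    msupport μ = μ.support := by
  ext x
  rw [(nhds_basis_opens x).mem_measureSupport]
  simp only [msupport, mem_ofPred_eq, pos_iff_ne_zero, and_imp]
  exact forall_congr' fun U => ⟨fun h hx hU => h hU hx, fun h hU hx => h hx hU⟩

lemma ae_mem_of_msupport_subset {X : Type*} [TopologicalSpace X] [HereditarilyLindelofSpace X]
    [MeasurableSpace X] {μ : Measure X} {L : Set X} (h : msupport μ ⊆ L) : ∀ᵐ x ∂μ, x ∈ L :=
  Filter.mem_of_superset Measure.support_mem_ae (msupport_eq_support μ ▸ h)

/-- `P` selects from `L` strongly unique nearest points, in the sense of approximation theory: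
moving away from `P x` within `L` increases the distance to `x` at least at rate `κ`. -/
structure IsStrongProjection {X : Type*} [PseudoMetricSpace X] (κ : ℝ≥0) (L : Set X)
    (P : X → X) : Prop where
  pos : 0 < κ
  mem : ∀ x, P x ∈ L
  dist_add_le : ∀ x, ∀ y ∈ L, dist x (P x) + κ * dist (P x) y ≤ dist x y

namespace IsStrongProjection

section PseudoMetricSpace

variable {X : Type*} [PseudoMetricSpace X] {κ : ℝ≥0} {L : Set X} {P : X → X}

lemma lipschitzWith (hP : IsStrongProjection κ L P) : LipschitzWith κ⁻¹ P := by
  refine LipschitzWith.of_dist_le_mul fun x y => ?_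
  have hx := (hP.dist_add_le x (P y) (hP.mem y)).trans (dist_triangle x y (P y))
  have hy := (hP.dist_add_le y (P x) (hP.mem x)).trans (dist_triangle y x (P x))
  rw [dist_comm (P y), dist_comm y x] at hy
  rw [NNReal.coe_inv, ← div_eq_inv_mul, le_div_iff₀' (NNReal.coe_pos.2 hP.pos)]
  linarith

lemma edist_rpow_add_le (hP : IsStrongProjection κ L P) {p : ℝ} (hp : 1 ≤ p) (x : X) {y : X}
    (hy : y ∈ L) : edist x (P x) ^ p + κ ^ p * edist (P x) y ^ p ≤ edist x y ^ p := by
  have hp0 : 0 ≤ p := zero_le_one.trans hp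
  have hedist : edist x (P x) + κ * edist (P x) y ≤ edist x y := by
    simp only [edist_nndist]
    exact_mod_cast hP.dist_add_le x y hy
  rw [← ENNReal.mul_rpow_of_nonneg _ _ hp0]
  exact (ENNReal.add_rpow_le_rpow_add _ _ hp).trans (ENNReal.rpow_le_rpow hedist hp0)

lemma transportCost_map_add_le [MeasurableSpace X] [BorelSpace X] [SecondCountableTopology X]
    (hP : IsStrongProjection κ L P) {p : ℝ} (hp : 1 ≤ p) {μ ν : Measure X}
    (hν : ∀ᵐ y ∂ν, y ∈ L) :
    transportCost p μ (μ.map P) + κ ^ p * transportCost p (μ.map P) ν ≤ transportCost p μ ν := by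
  have hPm : Measurable P := hP.lipschitzWith.continuous.measurable
  have hκ : (κ : ℝ≥0∞) ^ p ≠ ∞ :=
    ENNReal.rpow_ne_top_of_nonneg (zero_le_one.trans hp) ENNReal.coe_ne_top
  refine le_iInf₂ fun π hπ => ?_
  obtain ⟨rfl, rfl⟩ := hπ
  have hπL : ∀ᵐ q ∂π, q.2 ∈ L := ae_of_ae_map measurable_snd.aemeasurable hν
  have hmap : (π.map Prod.fst).map P = π.map (P ∘ Prod.fst) := Measure.map_map hPm measurable_fst
  have hPfst : Measurable (P ∘ Prod.fst : X × X → X) := hPm.comp measurable_fst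
  rw [hmap]
  calc transportCost p (π.map Prod.fst) (π.map (P ∘ Prod.fst)) +
        κ ^ p * transportCost p (π.map (P ∘ Prod.fst)) (π.map Prod.snd)
      ≤ ∫⁻ q, edist q.1 (P q.1) ^ p ∂π + κ ^ p * ∫⁻ q, edist (P q.1) q.2 ^ p ∂π :=
        add_le_add (transportCost_map_le_lintegral π measurable_fst hPfst)
          (mul_le_mul_right (transportCost_map_le_lintegral π hPfst measurable_snd) _)
    _ = ∫⁻ q, edist q.1 (P q.1) ^ p + κ ^ p * edist (P q.1) q.2 ^ p ∂π := by
        rw [← lintegral_const_mul' _ _ hκ, ← lintegral_add_left (by fun_prop)]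
    _ ≤ ∫⁻ q, edist q.1 q.2 ^ p ∂π :=
        lintegral_mono_ae (hπL.mono fun q hq => hP.edist_rpow_add_le hp q.1 hq)

lemma eq_map_of_transportCost_le [MeasurableSpace X] [BorelSpace X] [SecondCountableTopology X]
    (hP : IsStrongProjection κ L P) {p : ℝ} (hp : 1 ≤ p) {μ ν : Measure X} [IsProbabilityMeasure μ]
    [IsProbabilityMeasure ν] (hν : ∀ᵐ y ∂ν, y ∈ L) (hfin : transportCost p μ (μ.map P) ≠ ∞)
    (hle : transportCost p μ ν ≤ transportCost p μ (μ.map P)) : ν = μ.map P := by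
  have := Measure.isProbabilityMeasure_map (μ := μ) hP.lipschitzWith.continuous.aemeasurable
  have hzero : (κ : ℝ≥0∞) ^ p * transportCost p (μ.map P) ν = 0 :=
    le_zero_iff.1 <| (ENNReal.add_le_add_iff_left hfin).1 <|
      ((hP.transportCost_map_add_le hp hν).trans hle).trans_eq (add_zero _).symm
  have hκ : (κ : ℝ≥0∞) ^ p ≠ 0 :=
    (ENNReal.rpow_pos (ENNReal.coe_pos.2 hP.pos) ENNReal.coe_ne_top).ne'
  exact (eq_of_transportCost_eq_zero (zero_le_one.trans hp)
    ((mul_eq_zero.1 hzero).resolve_left hκ)).symm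

end PseudoMetricSpace

variable {X : Type*} [MetricSpace X] {κ : ℝ≥0} {L : Set X} {P Q : X → X}

lemma eq_of_forall_dist_le (hP : IsStrongProjection κ L P) (hQL : ∀ x, Q x ∈ L)
    (hQ : ∀ x, ∀ y ∈ L, dist x (Q x) ≤ dist x y) : Q = P := by
  funext x
  have hle : κ * dist (P x) (Q x) ≤ 0 := by
    linarith [hP.dist_add_le x (Q x) (hQL x), hQ x (P x) (hP.mem x)]
  exact (dist_le_zero.1 (nonpos_of_mul_nonpos_right hle (NNReal.coe_pos.2 hP.pos))).symm

lemma mem_iff_apply_eq (hP : IsStrongProjection κ L P) {x : X} : x ∈ L ↔ P x = x := by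
  refine ⟨fun hx => ?_, fun hx => hx ▸ hP.mem x⟩
  have hle := hP.dist_add_le x x hx
  rw [dist_self] at hle
  have hnonneg : 0 ≤ κ * dist (P x) x := by positivity
  exact (dist_le_zero.1 (by linarith)).symm

lemma isClosed (hP : IsStrongProjection κ L P) : IsClosed L := by
  have hL : L = {x | P x = x} := ext fun _ => hP.mem_iff_apply_eq
  exact hL ▸ isClosed_eq hP.lipschitzWith.continuous continuous_id

lemma msupport_map_subset [MeasurableSpace X] [BorelSpace X] (hP : IsStrongProjection κ L P)
    (μ : Measure X) : msupport (μ.map P) ⊆ L := by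
  rw [msupport_eq_support]
  refine Measure.support_subset_of_isClosed hP.isClosed ?_
  exact (ae_map_iff hP.lipschitzWith.continuous.aemeasurable hP.isClosed.measurableSet).2
    (ae_of_all _ hP.mem)

end IsStrongProjection

lemma max_mul_abs_sub_add_min_mul_abs_sub_le {α β a b t : ℝ} (hα : 0 < α) (hβ : 0 < β)
    (ht : α * (a - t) + β * (b - t) = 0) (r : ℝ) :
    max (α * |a - t|) (β * |b - t|) + min α β * |t - r| ≤ max (α * |a - r|) (β * |b - r|) := by
  have hbal : α * |a - t| = β * |b - t| := by
    have hneg := congrArg abs (eq_neg_of_add_eq_zero_left ht)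
    rwa [abs_neg, abs_mul, abs_mul, abs_of_pos hα, abs_of_pos hβ] at hneg
  have habs : ∀ c : ℝ, 0 ≤ (c - t) * (t - r) → |c - r| = |c - t| + |t - r| := fun c hc => by
    rw [← sub_add_sub_cancel c t r]
    exact (abs_add_eq_add_abs_iff _ _).2 (mul_nonneg_iff.1 hc)
  -- `t` lies between `a` and `b`, so one of them is on the side of `t` away from `r`.
  rcases le_total 0 ((a - t) * (t - r)) with ha | ha
  · refine le_max_of_le_left ?_
    rw [← hbal, max_self, habs a ha, mul_add]
    gcongr
    exact min_le_left α β
  · have hb : 0 ≤ (b - t) * (t - r) := by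
      have hsum : β * ((b - t) * (t - r)) = -(α * ((a - t) * (t - r))) := by
        linear_combination (t - r) * ht
      refine nonneg_of_mul_nonneg_right ?_ hβ
      rw [hsum]
      exact neg_nonneg.2 (mul_nonpos_of_nonneg_of_nonpos hα.le ha)
    refine le_max_of_le_right ?_
    rw [hbal, max_self, habs b hb, mul_add]
    gcongr
    exact min_le_right α β

lemma dist_add_smul_add_smul {E : Type*} [SeminormedAddCommGroup E] [NormedSpace ℝ E] (w v : E)
    (t r : ℝ) : dist (w + t • v) (w + r • v) = |t - r| * ‖v‖ := by
  rw [dist_add_left, dist_eq_norm, ← sub_smul, norm_smul, Real.norm_eq_abs]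

section Plane

variable {w v : ℝ × ℝ}

/-- The parameter on the line `r ↦ w + r • v` of the point nearest to `x` in the maximum metric: the
mean, with weights `|v.1|` and `|v.2|`, of the parameters at which the line meets the vertical and
the horizontal line through `x`. -/
noncomputable def nearestParam (w v x : ℝ × ℝ) : ℝ :=
  (|v.1| * ((x.1 - w.1) / v.1) + |v.2| * ((x.2 - w.2) / v.2)) / (|v.1| + |v.2|)

lemma dist_add_smul_eq_max (hv1 : v.1 ≠ 0) (hv2 : v.2 ≠ 0) (x : ℝ × ℝ) (r : ℝ) :
    dist x (w + r • v) =
      max (|v.1| * |(x.1 - w.1) / v.1 - r|) (|v.2| * |(x.2 - w.2) / v.2 - r|) := by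
  rw [Prod.dist_eq, Real.dist_eq, Real.dist_eq, ← abs_mul, ← abs_mul, mul_sub, mul_sub,
    mul_div_cancel₀ _ hv1, mul_div_cancel₀ _ hv2]
  simp only [Prod.fst_add, Prod.snd_add, Prod.smul_fst, Prod.smul_snd, smul_eq_mul]
  congr 2 <;> ring

lemma nearestParam_balanced (hv1 : v.1 ≠ 0) (x : ℝ × ℝ) :
    |v.1| * ((x.1 - w.1) / v.1 - nearestParam w v x) +
      |v.2| * ((x.2 - w.2) / v.2 - nearestParam w v x) = 0 := by
  have hweight : |v.1| + |v.2| ≠ 0 := (add_pos_of_pos_of_nonneg (abs_pos.2 hv1) (abs_nonneg _)).ne'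
  have hmul : nearestParam w v x * (|v.1| + |v.2|) =
      |v.1| * ((x.1 - w.1) / v.1) + |v.2| * ((x.2 - w.2) / v.2) := div_mul_cancel₀ _ hweight
  linear_combination -hmul

lemma isStrongProjection_nearestParam (hv1 : v.1 ≠ 0) (hv2 : v.2 ≠ 0) :
    IsStrongProjection (min ‖v.1‖₊ ‖v.2‖₊ / ‖v‖₊) (lineThrough w v)
      fun x => w + nearestParam w v x • v where
  pos := by
    have hv : v ≠ 0 := fun h => hv1 (by rw [h, Prod.fst_zero])
    exact div_pos (lt_min (nnnorm_pos.2 hv1) (nnnorm_pos.2 hv2)) (nnnorm_pos.2 hv)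
  mem x := ⟨_, rfl⟩
  dist_add_le := by
    rintro x _ ⟨r, rfl⟩
    have h1 : 0 < |v.1| := abs_pos.2 hv1
    have h2 : 0 < |v.2| := abs_pos.2 hv2
    have hv : ‖v‖ ≠ 0 := norm_ne_zero_iff.2 fun h => hv1 (by rw [h, Prod.fst_zero])
    set t := nearestParam w v x
    have hκ : (min |v.1| |v.2| / ‖v‖) * (|t - r| * ‖v‖) = min |v.1| |v.2| * |t - r| := by
      field_simp
    calc dist x (w + t • v) + ↑(min ‖v.1‖₊ ‖v.2‖₊ / ‖v‖₊) * dist (w + t • v) (w + r • v)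
        = dist x (w + t • v) + min |v.1| |v.2| * |t - r| := by
          rw [dist_add_smul_add_smul, ← hκ]
          simp only [NNReal.coe_div, NNReal.coe_min, coe_nnnorm, Real.norm_eq_abs]
      _ ≤ dist x (w + r • v) := by
          rw [dist_add_smul_eq_max hv1 hv2, dist_add_smul_eq_max hv1 hv2]
          exact max_mul_abs_sub_add_min_mul_abs_sub_le h1 h2
            (nearestParam_balanced hv1 x) r

lemma isStrongProjection_of_forall_dist_le (hv1 : v.1 ≠ 0) (hv2 : v.2 ≠ 0) {P : ℝ × ℝ → ℝ × ℝ}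
    (hP : ∀ x, P x ∈ lineThrough w v ∧ ∀ y ∈ lineThrough w v, dist x (P x) ≤ dist x y) :
    IsStrongProjection (min ‖v.1‖₊ ‖v.2‖₊ / ‖v‖₊) (lineThrough w v) P := by
  have hstrong := isStrongProjection_nearestParam (w := w) hv1 hv2
  exact hstrong.eq_of_forall_dist_le (fun x => (hP x).1) (fun x => (hP x).2) ▸ hstrong

end Plane

theorem pushforward_is_metric_projection_general {X : Type*} [MetricSpace X] [MeasurableSpace X]
    [BorelSpace X] [SecondCountableTopology X] {κ : ℝ≥0} {L : Set X} {P : X → X}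
    (hP : IsStrongProjection κ L P) {p : ℝ} (hp : 1 ≤ p) {μ : Measure X} (hμ : μ ∈ WSet X p) :
    μ.map P ∈ WSet X p ∧ msupport (μ.map P) ⊆ L ∧
    (∀ ν ∈ WSet X p, msupport ν ⊆ L → Wdist p μ (μ.map P) ≤ Wdist p μ ν) ∧
    (∀ ν ∈ WSet X p, msupport ν ⊆ L →
      (∀ ξ ∈ WSet X p, msupport ξ ⊆ L → Wdist p μ ν ≤ Wdist p μ ξ) → ν = μ.map P) := by
  have hp0 : 0 < p := zero_lt_one.trans_le hp
  have hPμ : μ.map P ∈ WSet X p := map_mem_WSet_of_lipschitzWith hp0.le hP.lipschitzWith hμ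
  have hPμL := hP.msupport_map_subset μ
  have hfin : ∀ {ξ}, ξ ∈ WSet X p → transportCost p μ ξ ≠ ∞ :=
    fun hξ => (transportCost_lt_top hp0.le hμ hξ).ne
  refine ⟨hPμ, hPμL, fun ν hν hνL => ?_, fun ν hν hνL hmin => ?_⟩
  · exact (Wdist_le_Wdist_iff hp0 (hfin hPμ) (hfin hν)).2
      (le_self_add.trans (hP.transportCost_map_add_le hp (ae_mem_of_msupport_subset hνL)))
  · have := hμ.1
    have := hν.1
    exact hP.eq_map_of_transportCost_le hp (ae_mem_of_msupport_subset hνL) (hfin hPμ)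
      ((Wdist_le_Wdist_iff hp0 (hfin hν) (hfin hPμ)).1 (hmin _ hPμ hPμL))

/-- For a line `L` not parallel to either coordinate axis with nearest-point projection
`P`, the push-forward `μ̂ = P_#μ` is the unique measure supported on `L` minimizing the
`p`-Wasserstein distance to `μ`. -/
theorem pushforward_is_metric_projection (p : ℝ) (hp : 1 ≤ p) (w v : ℝ × ℝ)
    (hv1 : v.1 ≠ 0) (hv2 : v.2 ≠ 0) (P : ℝ × ℝ → ℝ × ℝ)
    (hP : ∀ x : ℝ × ℝ, P x ∈ lineThrough w v ∧
      ∀ y ∈ lineThrough w v, dist x (P x) ≤ dist x y)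
    (μ : Measure (ℝ × ℝ)) (hμ : μ ∈ WSet (ℝ × ℝ) p) :
    μ.map P ∈ WSet (ℝ × ℝ) p ∧ msupport (μ.map P) ⊆ lineThrough w v ∧
    (∀ ν ∈ WSet (ℝ × ℝ) p, msupport ν ⊆ lineThrough w v →
      Wdist p μ (μ.map P) ≤ Wdist p μ ν) ∧
    (∀ ν ∈ WSet (ℝ × ℝ) p, msupport ν ⊆ lineThrough w v →
      (∀ ξ ∈ WSet (ℝ × ℝ) p, msupport ξ ⊆ lineThrough w v → Wdist p μ ν ≤ Wdist p μ ξ) →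
      ν = μ.map P) :=
  pushforward_is_metric_projection_general
    (isStrongProjection_of_forall_dist_le hv1 hv2 hP) hp hμ
end

section
/- Fix ε ∈ {−1,1} and a ∈ ℝ and let L = L_{ε,a} = {(x₁,x₂) ∈ ℝ² : x₂ = ε x₁ + a}. Define e : ℝ² → ℝ² by e(y₁,y₂) = (−ε, 1) if y₂ ≥ ε y₁ + a and e(y₁,y₂) = (ε, −1) if y₂ < ε y₁ + a. Then for every x ∈ L, every y ∈ ℝ² and every t ≥ 0: d_m(x, y + t·e(y)) = d_m(x, y) + t, and d_m(y, y + t·e(y)) = t. Moreover, for every t ≥ 0 the map y ↦ y + t·e(y) is injective on ℝ². -/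
open MeasureTheory

/-- The allocation of directions associated to the diagonal line `L_{ε,a}`. -/
noncomputable def dirAlloc (ε a : ℝ) (y : ℝ × ℝ) : ℝ × ℝ :=
  if ε * y.1 + a ≤ y.2 then (-ε, 1) else (ε, -1)

/-!
In the coordinates `s = x₂ - ε x₁ - a` and `c = x₂ + ε x₁`, twice the max-distance is the
`ℓ¹`-distance `|Δs| + |Δc|`, and the line is `s = 0`. Moving along `e` for time `t` fixes `c` and
pushes `s` away from `0` by `2t`, so distances to points of the line grow by exactly `t`.
Since the push acts strictly monotonically on `s`, and `e` depends only on `s`, no two points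
can be merged.
-/

section RightSign

variable {R : Type*} [Ring R] [LinearOrder R]

/-- The sign of `s`, with the value `1` at `0` (unlike `SignType.sign`): applied to `lineOffset`, it
tells on which side of a diagonal line a point lies, the line itself counting as upper side. -/
def rightSign (s : R) : R := if 0 ≤ s then 1 else -1

theorem rightSign_of_nonneg {s : R} (hs : 0 ≤ s) : rightSign s = 1 := if_pos hs

theorem rightSign_of_neg {s : R} (hs : s < 0) : rightSign s = -1 := if_neg hs.not_ge

variable [IsOrderedRing R]

theorem abs_rightSign (s : R) : |rightSign s| = 1 := by
  rcases le_or_gt 0 s with hs | hs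
  · rw [rightSign_of_nonneg hs, abs_one]
  · rw [rightSign_of_neg hs, abs_neg, abs_one]

theorem monotone_rightSign : Monotone (rightSign : R → R) := by
  intro s s' hss'
  rcases le_or_gt 0 s with hs | hs
  · rw [rightSign_of_nonneg hs, rightSign_of_nonneg (hs.trans hss')]
  · rw [rightSign_of_neg hs]
    exact (abs_le.mp (abs_rightSign s').le).1

theorem strictMono_add_mul_rightSign {t : R} (ht : 0 ≤ t) :
    StrictMono fun s : R => s + t * rightSign s :=
  strictMono_id.add_monotone (monotone_rightSign.const_mul ht)

theorem abs_add_mul_rightSign (s : R) {t : R} (ht : 0 ≤ t) :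
    |s + t * rightSign s| = |s| + t := by
  rcases le_or_gt 0 s with hs | hs
  · rw [rightSign_of_nonneg hs, mul_one, abs_of_nonneg (add_nonneg hs ht), abs_of_nonneg hs]
  · rw [rightSign_of_neg hs, mul_neg_one, abs_of_neg hs, ← sub_eq_add_neg,
      abs_of_nonpos (sub_nonpos.mpr (hs.le.trans ht)), neg_sub', sub_neg_eq_add]

end RightSign

theorem two_nsmul_max_abs_abs {G : Type*} [AddCommGroup G] [LinearOrder G] [IsOrderedAddMonoid G]
    (u v : G) : 2 • max |u| |v| = |u - v| + |u + v| := by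
  grind

/-- The coordinate `s = y₂ - ε y₁ - a` transverse to the line `L_{ε,a}`. It is the vertical
offset of `y` from the line, not its distance to it. -/
def lineOffset (ε a : ℝ) (y : ℝ × ℝ) : ℝ := y.2 - ε * y.1 - a

/-- The coordinate `c = y₂ + ε y₁`, which for `|ε| = 1` measures the position along the direction of
the line `L_{ε,a}`, scaled so that its increments on the line are `2 (y₂ - x₂)`. -/
def lineCoord (ε : ℝ) (y : ℝ × ℝ) : ℝ := y.2 + ε * y.1

theorem mem_diagLine_iff_lineOffset_eq_zero {ε a : ℝ} {y : ℝ × ℝ} :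
    y ∈ diagLine ε a ↔ lineOffset ε a y = 0 := by
  change y.2 = ε * y.1 + a ↔ _
  rw [lineOffset, sub_sub, sub_eq_zero]

theorem two_mul_dist_eq_abs_lineOffset_add_abs_lineCoord {ε : ℝ} (hε : |ε| = 1) (a : ℝ)
    (x y : ℝ × ℝ) :
    2 * dist x y =
      |lineOffset ε a y - lineOffset ε a x| + |lineCoord ε y - lineCoord ε x| := by
  have scale_fst : |ε * (y.1 - x.1)| = |y.1 - x.1| := by rw [abs_mul, hε, one_mul]
  calc 2 * dist x y
      = 2 • max |y.2 - x.2| |ε * (y.1 - x.1)| := by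
        rw [scale_fst, dist_comm, Prod.dist_eq, Real.dist_eq, Real.dist_eq, max_comm,
          nsmul_eq_mul, Nat.cast_ofNat]
    _ = |y.2 - x.2 - ε * (y.1 - x.1)| + |y.2 - x.2 + ε * (y.1 - x.1)| :=
        two_nsmul_max_abs_abs _ _
    _ = |lineOffset ε a y - lineOffset ε a x| + |lineCoord ε y - lineCoord ε x| := by
        unfold lineOffset lineCoord
        ring_nf

theorem dirAlloc_eq_rightSign_smul (ε a : ℝ) (y : ℝ × ℝ) :
    dirAlloc ε a y = rightSign (lineOffset ε a y) • (-ε, 1) := by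
  have side_iff : ε * y.1 + a ≤ y.2 ↔ 0 ≤ lineOffset ε a y := by
    rw [lineOffset, sub_sub, sub_nonneg]
  simp only [dirAlloc, rightSign, side_iff]
  split_ifs <;> simp

theorem norm_dirAlloc {ε : ℝ} (hε : |ε| ≤ 1) (a : ℝ) (y : ℝ × ℝ) : ‖dirAlloc ε a y‖ = 1 := by
  rw [dirAlloc_eq_rightSign_smul, norm_smul, Real.norm_eq_abs, abs_rightSign, one_mul,
    Prod.norm_mk, norm_neg, norm_one, Real.norm_eq_abs, max_eq_right hε]

theorem lineOffset_add_smul_dirAlloc (ε a t : ℝ) (y : ℝ × ℝ) :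
    lineOffset ε a (y + t • dirAlloc ε a y) =
      lineOffset ε a y + (1 + ε ^ 2) * t * rightSign (lineOffset ε a y) := by
  rw [dirAlloc_eq_rightSign_smul]
  generalize rightSign (lineOffset ε a y) = σ
  simp only [lineOffset, Prod.fst_add, Prod.snd_add, Prod.smul_mk, smul_eq_mul]
  ring

theorem lineCoord_add_smul_dirAlloc {ε : ℝ} (hε : |ε| = 1) (a t : ℝ) (y : ℝ × ℝ) :
    lineCoord ε (y + t • dirAlloc ε a y) = lineCoord ε y := by
  have hε_sq : ε ^ 2 = 1 := by rw [← sq_abs, hε, one_pow]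
  rw [dirAlloc_eq_rightSign_smul]
  simp only [lineCoord, Prod.fst_add, Prod.snd_add, Prod.smul_mk, smul_eq_mul]
  linear_combination -t * rightSign (lineOffset ε a y) * hε_sq

theorem dist_add_smul_dirAlloc {ε a : ℝ} (hε : |ε| = 1) {x : ℝ × ℝ} (hx : x ∈ diagLine ε a)
    (y : ℝ × ℝ) {t : ℝ} (ht : 0 ≤ t) :
    dist x (y + t • dirAlloc ε a y) = dist x y + t := by
  have hε_sq : ε ^ 2 = 1 := by rw [← sq_abs, hε, one_pow]
  have two_mul_dist (z : ℝ × ℝ) :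
      2 * dist x z = |lineOffset ε a z| + |lineCoord ε z - lineCoord ε x| := by
    rw [two_mul_dist_eq_abs_lineOffset_add_abs_lineCoord hε a,
      mem_diagLine_iff_lineOffset_eq_zero.mp hx, sub_zero]
  have abs_offset : |lineOffset ε a (y + t • dirAlloc ε a y)| = |lineOffset ε a y| + 2 * t := by
    rw [lineOffset_add_smul_dirAlloc, abs_add_mul_rightSign _ (by positivity), hε_sq,
      one_add_one_eq_two]
  have moved := two_mul_dist (y + t • dirAlloc ε a y)
  rw [abs_offset, lineCoord_add_smul_dirAlloc hε] at moved
  linarith [two_mul_dist y]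

theorem dist_self_add_smul_dirAlloc {ε : ℝ} (hε : |ε| ≤ 1) (a : ℝ) (y : ℝ × ℝ) {t : ℝ}
    (ht : 0 ≤ t) : dist y (y + t • dirAlloc ε a y) = t := by
  rw [dist_self_add_right, norm_smul_of_nonneg ht, norm_dirAlloc hε, mul_one]

theorem injective_add_smul_dirAlloc (ε a : ℝ) {t : ℝ} (ht : 0 ≤ t) :
    Function.Injective fun y : ℝ × ℝ => y + t • dirAlloc ε a y := by
  intro y z (hyz : y + t • dirAlloc ε a y = z + t • dirAlloc ε a z)
  have offset_eq : lineOffset ε a y = lineOffset ε a z := by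
    apply (strictMono_add_mul_rightSign (t := (1 + ε ^ 2) * t) (by positivity)).injective
    simpa only [lineOffset_add_smul_dirAlloc] using congrArg (lineOffset ε a) hyz
  have dir_eq : dirAlloc ε a y = dirAlloc ε a z := by
    simp only [dirAlloc_eq_rightSign_smul, offset_eq]
  rw [dir_eq] at hyz
  exact add_right_cancel hyz

/-- Key properties of the allocation of directions of a diagonal line `L_{ε,a}`:
moving from `y` in direction `e(y)` for time `t` increases the max-distance to every
point of the line by exactly `t`, moves `y` exactly distance `t`, and the resulting
map is injective. -/
theorem direction_allocation_properties (ε a : ℝ) (hε : ε = 1 ∨ ε = -1) :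
    (∀ x ∈ diagLine ε a, ∀ y : ℝ × ℝ, ∀ t : ℝ, 0 ≤ t →
      dist x (y + t • dirAlloc ε a y) = dist x y + t ∧
      dist y (y + t • dirAlloc ε a y) = t) ∧
    ∀ t : ℝ, 0 ≤ t → Function.Injective (fun y : ℝ × ℝ => y + t • dirAlloc ε a y) := by
  have abs_ε : |ε| = 1 := (abs_eq zero_le_one).mpr hε
  exact ⟨fun _ hx y _ ht =>
      ⟨dist_add_smul_dirAlloc abs_ε hx y ht, dist_self_add_smul_dirAlloc abs_ε.le a y ht⟩,
    fun _ ht => injective_add_smul_dirAlloc ε a ht⟩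
end
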